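/- For all cut-free named GS4 derivations P of the sequent ⊢Γ,A with A non-atomic, the axiom graph is invariant under isolation: ⟦isl(P,A)⟧ = ⟦P⟧. -/

import Mathlib

open scoped Classical

noncomputable section

namespace GS4

/-- Named classical propositional formulas over atoms `α`, with names in `ℕ`. -/
inductive NForm (α : Type) : Type
  | atom : ℕ → α → NForm α
  | or   : NForm α → NForm α → NForm α
  | and  : NForm α → NForm α → NForm α

variable {α : Type}

/-- Name-preserving De Morgan negation, w.r.t. an involution `bar` on atoms. -/
def negF (bar : α → α) : NForm α → NForm α
  | .atom x a => .atom x (bar a)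
  | .or A B => .and (negF bar A) (negF bar B)
  | .and A B => .or (negF bar A) (negF bar B)

/-- The set of names occurring in a named formula. -/
def NForm.names : NForm α → Set ℕ
  | .atom x _ => {x}
  | .or A B => A.names ∪ B.names
  | .and A B => A.names ∪ B.names

/-- A named formula is sharing-free if every name occurs at most once in it. -/
def NForm.sharingFree : NForm α → Prop
  | .atom _ _ => True
  | .or A B => A.sharingFree ∧ B.sharingFree ∧ Disjoint A.names B.names
  | .and A B => A.sharingFree ∧ B.sharingFree ∧ Disjoint A.names B.names

def NForm.isAtom : NForm α → Prop
  | .atom _ _ => True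
  | _ => False

/-- Anonymous formulas (shapes): `A ≡ B` iff their shapes coincide. -/
inductive Shape (α : Type) : Type
  | atom : α → Shape α
  | or   : Shape α → Shape α → Shape α
  | and  : Shape α → Shape α → Shape α

def NForm.shape : NForm α → Shape α
  | .atom _ a => .atom a
  | .or A B => .or A.shape B.shape
  | .and A B => .and A.shape B.shape

/-- `HasAtom A x a`: the atomic formula `x:a` occurs in `A`. -/
def HasAtom : NForm α → ℕ → α → Prop
  | .atom y b, x, a => y = x ∧ b = a
  | .or A B, x, a => HasAtom A x a ∨ HasAtom B x a
  | .and A B, x, a => HasAtom A x a ∨ HasAtom B x a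

/-- Names of a finite set of named formulas. -/
def snames (Γ : Finset (NForm α)) : Set ℕ := ⋃ A ∈ Γ, A.names

/-- A finite set of named formulas is sharing-free if all its elements are
sharing-free with pairwise disjoint name sets. -/
def SFSet (Γ : Finset (NForm α)) : Prop :=
  (∀ A ∈ Γ, A.sharingFree) ∧
  ∀ A ∈ Γ, ∀ B ∈ Γ, A ≠ B → Disjoint A.names B.names

/-- `x:a` occurs in some formula of `Γ` (i.e. `Γ[x] = a` for sharing-free `Γ`). -/
def HasAtomS (Γ : Finset (NForm α)) (x : ℕ) (a : α) : Prop :=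
  ∃ A ∈ Γ, HasAtom A x a

/-- Branch sets of named formulas. -/
def BrF : NForm α → Set (Set ℕ)
  | .atom x _ => {{x}}
  | .or A B => {X | ∃ Y ∈ BrF A, ∃ Z ∈ BrF B, X = Y ∪ Z}
  | .and A B => BrF A ∪ BrF B

/-- Branch sets of sequents (finite sharing-free sets of named formulas). -/
def BrS (Γ : Finset (NForm α)) : Set (Set ℕ) :=
  {X | X ⊆ snames Γ ∧ ∀ A ∈ Γ, X ∩ A.names ∈ BrF A}

/-! ## Branch-labeled name graphs -/

/-- A branch-labeled name graph: vertices and a relation between unordered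
pairs of vertices and branch labels. -/
structure BLGraph : Type where
  verts : Set ℕ
  rel : Sym2 ℕ → Set ℕ → Prop

/-- Well-formedness of a bl-graph: related pairs consist of distinct vertices,
labels are sets of vertices, and each edge is included in its labels. -/
def BLGraph.IsBL (G : BLGraph) : Prop :=
  ∀ e X, G.rel e X → ¬ e.IsDiag ∧ X ⊆ G.verts ∧ ∀ v ∈ e, v ∈ X

def BLGraph.Edges (G : BLGraph) : Set (Sym2 ℕ) := {e | ∃ X, G.rel e X}

def BLGraph.Br (G : BLGraph) : Set (Set ℕ) := {X | ∃ e, G.rel e X}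

def BLGraph.union (G H : BLGraph) : BLGraph :=
  ⟨G.verts ∪ H.verts, fun e X => G.rel e X ∨ H.rel e X⟩

/-- Restriction `G↾_S` of a bl-graph. -/
def BLGraph.restrict (G : BLGraph) (S : Set ℕ) : BLGraph :=
  ⟨G.verts ∩ S, fun e X => G.rel e X ∧ X ⊆ S⟩

/-- The interface-relativized edge-branch relation `e ⊰^I_G X`. -/
def BLGraph.relI (G : BLGraph) (I : Set ℕ) (e : Sym2 ℕ) (X : Set ℕ) : Prop :=
  ∃ Y, G.rel e Y ∧ X = Y \ I

/-- `z 0, …, z (n-1)` is an `X`-labeled alternating path between `G` and `H`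
through the interface `I`. -/
def AltPath (G H : BLGraph) (I X : Set ℕ) (n : ℕ) (z : ℕ → ℕ) : Prop :=
  1 < n ∧
  (∀ i < n, ∀ j < n, z i = z j → i = j) ∧
  (∀ i, 0 < i → i + 1 < n → z i ∈ I) ∧
  ((∀ i, i + 1 < n →
      (Even i → G.relI I s(z i, z (i + 1)) X) ∧ (¬ Even i → H.relI I s(z i, z (i + 1)) X)) ∨
   (∀ i, i + 1 < n →
      (Even i → H.relI I s(z i, z (i + 1)) X) ∧ (¬ Even i → G.relI I s(z i, z (i + 1)) X)))

/-- Composition of bl-graphs over an interface `I`. -/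
def BLGraph.comp (G H : BLGraph) (I : Set ℕ) : BLGraph :=
  ⟨(G.verts ∪ H.verts) \ I,
   fun e X => ∃ n z, AltPath G H I X n z ∧ z 0 ∉ I ∧ z (n - 1) ∉ I ∧
     e = s(z 0, z (n - 1))⟩

/-- The weakening operator on bl-graphs: add vertices `V` and extend every
branch label by a member of `Brs`. -/
def blwk (V : Set ℕ) (Brs : Set (Set ℕ)) (G : BLGraph) : BLGraph :=
  ⟨G.verts ∪ V, fun e X => ∃ Y Z, G.rel e Y ∧ Z ∈ Brs ∧ X = Y ∪ Z⟩

/-- The bl-identity graph `id_{A,C}` on a pair of dual formulas. -/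
def blid : NForm α → NForm α → BLGraph
  | .atom x _, .atom y _ => ⟨{x, y}, fun e X => e = s(x, y) ∧ X = {x, y}⟩
  | .or A1 A2, .and C1 C2 =>
      (blwk A2.names (BrF A2) (blid A1 C1)).union (blwk A1.names (BrF A1) (blid A2 C2))
  | .and A1 A2, .or C1 C2 =>
      (blwk C2.names (BrF C2) (blid A1 C1)).union (blwk C1.names (BrF C1) (blid A2 C2))
  | _, _ => ⟨∅, fun _ _ => False⟩

/-! ## Simple name graphs -/

/-- A simple name graph. -/
structure NGraph : Type where
  verts : Set ℕ
  edges : Set (Sym2 ℕ)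

/-- Subgraph relation `H ⊑ G`. -/
def NGraph.Sub (H G : NGraph) : Prop := H.verts ⊆ G.verts ∧ H.edges ⊆ G.edges

def NGraph.union (G H : NGraph) : NGraph := ⟨G.verts ∪ H.verts, G.edges ∪ H.edges⟩

/-- Induced subgraph `G↾_S`. -/
def NGraph.restrict (G : NGraph) (S : Set ℕ) : NGraph :=
  ⟨G.verts ∩ S, {e ∈ G.edges | ∀ v ∈ e, v ∈ S}⟩

/-- Alternating paths between simple name graphs through an interface. -/
def NAltPath (G H : NGraph) (I : Set ℕ) (n : ℕ) (z : ℕ → ℕ) : Prop :=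
  0 < n ∧
  (∀ i < n, ∀ j < n, z i = z j → i = j) ∧
  (∀ i, 0 < i → i + 1 < n → z i ∈ I) ∧
  ((∀ i, i + 1 < n →
      (Even i → s(z i, z (i + 1)) ∈ G.edges) ∧ (¬ Even i → s(z i, z (i + 1)) ∈ H.edges)) ∨
   (∀ i, i + 1 < n →
      (Even i → s(z i, z (i + 1)) ∈ H.edges) ∧ (¬ Even i → s(z i, z (i + 1)) ∈ G.edges)))

/-- Composition of simple name graphs over an interface. -/
def NGraph.comp (G H : NGraph) (I : Set ℕ) : NGraph :=
  ⟨(G.verts ∪ H.verts) \ I,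
   {e | ∃ x y, x ≠ y ∧ x ∈ (G.verts ∪ H.verts) \ I ∧ y ∈ (G.verts ∪ H.verts) \ I ∧
        e = s(x, y) ∧ ∃ n z, NAltPath G H I n z ∧ z 0 = x ∧ z (n - 1) = y}⟩

/-- The identity graph `Id_{A,C}` on a pair of dual formulas. -/
def idg : NForm α → NForm α → NGraph
  | .atom x _, .atom y _ => ⟨{x, y}, {s(x, y)}⟩
  | .or A1 A2, .and C1 C2 => (idg A1 C1).union (idg A2 C2)
  | .and A1 A2, .or C1 C2 => (idg A1 C1).union (idg A2 C2)
  | _, _ => ⟨∅, ∅⟩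

/-- The edgeless (weakening) graph on the names of `Γ`. -/
def wkg (Γ : Finset (NForm α)) : NGraph := ⟨snames Γ, ∅⟩

/-! ## Named GS4 derivations -/

/-- Named GS4 derivation trees. -/
inductive Deriv (α : Type) : Type
  | ax (Γ : Finset (NForm α)) (A C : NForm α)
  | cut (A : NForm α) (P Q : Deriv α)
  | sup (P Q : Deriv α)
  | orI (A B : NForm α) (P : Deriv α)
  | andI (A B : NForm α) (P Q : Deriv α)

/-- Conclusion of a derivation tree. -/
def concl : Deriv α → Finset (NForm α)
  | .ax Γ A C => insert A (insert C Γ)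
  | .cut A P _ => (concl P).erase A
  | .sup P _ => concl P
  | .orI A B P => insert (NForm.or A B) (((concl P).erase A).erase B)
  | .andI A B P _ => insert (NForm.and A B) ((concl P).erase A)

/-- Well-formedness of derivation trees w.r.t. the atom involution `bar`:
each rule is applied correctly to sharing-free named sequents. -/
def WF (bar : α → α) : Deriv α → Prop
  | .ax Γ A C =>
      A.shape = (negF bar C).shape ∧
      A.sharingFree ∧ C.sharingFree ∧ SFSet Γ ∧
      Disjoint A.names C.names ∧
      Disjoint A.names (snames Γ) ∧ Disjoint C.names (snames Γ)
  | .cut A P Q =>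
      WF bar P ∧ WF bar Q ∧
      ∃ Γ : Finset (NForm α), A ∉ Γ ∧ negF bar A ∉ Γ ∧
        concl P = insert A Γ ∧ concl Q = insert (negF bar A) Γ ∧
        A.sharingFree ∧ SFSet Γ ∧ Disjoint A.names (snames Γ)
  | .sup P Q => WF bar P ∧ WF bar Q ∧ concl P = concl Q
  | .orI A B P =>
      WF bar P ∧
      ∃ Γ : Finset (NForm α), A ∉ Γ ∧ B ∉ Γ ∧ A ≠ B ∧
        concl P = insert A (insert B Γ) ∧
        A.sharingFree ∧ B.sharingFree ∧ SFSet Γ ∧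
        Disjoint A.names B.names ∧
        Disjoint A.names (snames Γ) ∧ Disjoint B.names (snames Γ)
  | .andI A B P Q =>
      WF bar P ∧ WF bar Q ∧
      ∃ Γ : Finset (NForm α), A ∉ Γ ∧ B ∉ Γ ∧
        concl P = insert A Γ ∧ concl Q = insert B Γ ∧
        A.sharingFree ∧ B.sharingFree ∧ SFSet Γ ∧
        Disjoint A.names B.names ∧
        Disjoint A.names (snames Γ) ∧ Disjoint B.names (snames Γ)

/-- A derivation is cut-free if it contains no cut rule. -/
def CutFree : Deriv α → Prop
  | .ax _ _ _ => True
  | .cut _ _ _ => False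
  | .sup P Q => CutFree P ∧ CutFree Q
  | .orI _ _ P => CutFree P
  | .andI _ _ P Q => CutFree P ∧ CutFree Q

/-- The branch-labeled axiom graph `⟨⟨P⟩⟩` of a derivation. -/
def blaxg : Deriv α → BLGraph
  | .ax Γ A C => blwk (snames Γ) (BrS Γ) (blid A C)
  | .cut A P Q => BLGraph.comp (blaxg P) (blaxg Q) A.names
  | .sup P Q => (blaxg P).union (blaxg Q)
  | .orI _ _ P => blaxg P
  | .andI _ _ P Q => (blaxg P).union (blaxg Q)

/-- The (simple) axiom graph `⟦P⟧` of a derivation. -/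
def axg : Deriv α → NGraph
  | .ax Γ A C => (wkg Γ).union (idg A C)
  | .cut A P Q => NGraph.comp (axg P) (axg Q) A.names
  | .sup P Q => (axg P).union (axg Q)
  | .orI _ _ P => axg P
  | .andI _ _ P Q => (axg P).union (axg Q)

/-! ## Inversion and isolation -/

/-- Inversion of a disjunction `D ∨ E` in the conclusion. -/
def inv (D E : NForm α) : Deriv α → Deriv α
  | .ax Γ A C =>
      if A = NForm.or D E then
        match C with
        | .and C1 C2 =>
            .andI C1 C2 (.ax (insert E Γ) D C1) (.ax (insert D Γ) E C2)
        | _ => .ax Γ A C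
      else if C = NForm.or D E then
        match A with
        | .and A1 A2 =>
            .andI A1 A2 (.ax (insert E Γ) A1 D) (.ax (insert D Γ) A2 E)
        | _ => .ax Γ A C
      else
        .ax (insert D (insert E (Γ.erase (NForm.or D E)))) A C
  | .cut A P Q => .cut A (inv D E P) (inv D E Q)
  | .sup P Q => .sup (inv D E P) (inv D E Q)
  | .orI A B P => if A = D ∧ B = E then P else .orI A B (inv D E P)
  | .andI A B P Q => .andI A B (inv D E P) (inv D E Q)

/-- Left inversion of a conjunction `D ∧ E` in the conclusion. -/
def invl (D E : NForm α) : Deriv α → Deriv α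
  | .ax Γ A C =>
      if A = NForm.and D E then
        match C with
        | .or C1 C2 => .orI C1 C2 (.ax (insert C2 Γ) D C1)
        | _ => .ax Γ A C
      else if C = NForm.and D E then
        match A with
        | .or A1 A2 => .orI A1 A2 (.ax (insert A2 Γ) A1 D)
        | _ => .ax Γ A C
      else
        .ax (insert D (Γ.erase (NForm.and D E))) A C
  | .cut A P Q => .cut A (invl D E P) (invl D E Q)
  | .sup P Q => .sup (invl D E P) (invl D E Q)
  | .orI A B P => .orI A B (invl D E P)
  | .andI A B P Q => if A = D ∧ B = E then P else .andI A B (invl D E P) (invl D E Q)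

/-- Right inversion of a conjunction `D ∧ E` in the conclusion. -/
def invr (D E : NForm α) : Deriv α → Deriv α
  | .ax Γ A C =>
      if A = NForm.and D E then
        match C with
        | .or C1 C2 => .orI C1 C2 (.ax (insert C1 Γ) E C2)
        | _ => .ax Γ A C
      else if C = NForm.and D E then
        match A with
        | .or A1 A2 => .orI A1 A2 (.ax (insert A1 Γ) A2 E)
        | _ => .ax Γ A C
      else
        .ax (insert E (Γ.erase (NForm.and D E))) A C
  | .cut A P Q => .cut A (invr D E P) (invr D E Q)
  | .sup P Q => .sup (invr D E P) (invr D E Q)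
  | .orI A B P => .orI A B (invr D E P)
  | .andI A B P Q => if A = D ∧ B = E then Q else .andI A B (invr D E P) (invr D E Q)

/-- Isolation of a non-atomic formula in the conclusion. -/
def isl : NForm α → Deriv α → Deriv α
  | .or A B, P => .orI A B (inv A B P)
  | .and A B, P => .andI A B (invl A B P) (invr A B P)
  | .atom _ _, P => P

/-- Totality of a bl-graph w.r.t. a sharing-free named sequent. -/
def Total (bar : α → α) (G : BLGraph) (Γ : Finset (NForm α)) : Prop :=
  G.verts = snames Γ ∧
  G.Br = BrS Γ ∧
  ∀ x y : ℕ, s(x, y) ∈ G.Edges →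
    ∀ a b : α, HasAtomS Γ x a → HasAtomS Γ y b → a = bar b

end GS4

namespace GS4

variable {α : Type}

theorem NGraph.eq_of_mem_iff {G H : NGraph} (hv : ∀ x, x ∈ G.verts ↔ x ∈ H.verts)
    (he : ∀ e, e ∈ G.edges ↔ e ∈ H.edges) : G = H := by
  cases G
  cases H
  exact congrArg₂ NGraph.mk (Set.ext hv) (Set.ext he)

theorem NGraph.union_union_union_comm (G₁ G₂ H₁ H₂ : NGraph) :
    (G₁.union G₂).union (H₁.union H₂) = (G₁.union H₁).union (G₂.union H₂) :=
  congrArg₂ NGraph.mk (Set.union_union_union_comm ..) (Set.union_union_union_comm ..)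

theorem mem_snames {Γ : Finset (NForm α)} {x : ℕ} : x ∈ snames Γ ↔ ∃ A ∈ Γ, x ∈ A.names := by
  simp [snames]

theorem snames_insert (A : NForm α) (Γ : Finset (NForm α)) :
    snames (insert A Γ) = A.names ∪ snames Γ := by
  ext x
  simp [mem_snames]

theorem names_union_snames_erase {A : NForm α} {Γ : Finset (NForm α)} (h : A ∈ Γ) :
    A.names ∪ snames (Γ.erase A) = snames Γ := by
  rw [← snames_insert, Finset.insert_erase h]

theorem idg_verts (bar : α → α) :
    ∀ A C : NForm α, A.shape = (negF bar C).shape → (idg A C).verts = A.names ∪ C.names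
  | .atom _ _, .atom _ _, _ => rfl
  | .or A₁ A₂, .and C₁ C₂, h => by
      simp only [NForm.shape, negF, Shape.or.injEq] at h
      simp only [idg, NGraph.union, NForm.names, idg_verts bar _ _ h.1, idg_verts bar _ _ h.2]
      exact Set.union_union_union_comm ..
  | .and A₁ A₂, .or C₁ C₂, h => by
      simp only [NForm.shape, negF, Shape.and.injEq] at h
      simp only [idg, NGraph.union, NForm.names, idg_verts bar _ _ h.1, idg_verts bar _ _ h.2]
      exact Set.union_union_union_comm ..
  | .atom _ _, .or _ _, h | .atom _ _, .and _ _, h | .or _ _, .atom _ _, h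
  | .and _ _, .atom _ _, h | .or _ _, .or _ _, h | .and _ _, .and _ _, h => by
      simp [NForm.shape, negF] at h

theorem exists_and_of_or_shape {bar : α → α} {D E C : NForm α}
    (h : (NForm.or D E).shape = (negF bar C).shape) :
    ∃ C₁ C₂, C = .and C₁ C₂ ∧ D.shape = (negF bar C₁).shape ∧ E.shape = (negF bar C₂).shape := by
  cases C <;> simp_all [NForm.shape, negF]

theorem exists_or_of_and_shape {bar : α → α} {D E C : NForm α}
    (h : (NForm.and D E).shape = (negF bar C).shape) :
    ∃ C₁ C₂, C = .or C₁ C₂ ∧ D.shape = (negF bar C₁).shape ∧ E.shape = (negF bar C₂).shape := by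
  cases C <;> simp_all [NForm.shape, negF]

theorem exists_and_of_shape_or {bar : α → α} {D E A : NForm α}
    (h : A.shape = (negF bar (NForm.or D E)).shape) :
    ∃ A₁ A₂, A = .and A₁ A₂ ∧ A₁.shape = (negF bar D).shape ∧ A₂.shape = (negF bar E).shape := by
  cases A <;> simp_all [NForm.shape, negF]

theorem exists_or_of_shape_and {bar : α → α} {D E A : NForm α}
    (h : A.shape = (negF bar (NForm.and D E)).shape) :
    ∃ A₁ A₂, A = .or A₁ A₂ ∧ A₁.shape = (negF bar D).shape ∧ A₂.shape = (negF bar E).shape := by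
  cases A <;> simp_all [NForm.shape, negF]

theorem mem_of_mem_concl_orI {A B F : NForm α} {P : Deriv α}
    (hF : F ∈ concl (.orI A B P)) (hne : F ≠ .or A B) :
    F ∈ concl P := by
  simp only [concl, Finset.mem_insert, Finset.mem_erase] at hF
  tauto

theorem mem_of_mem_concl_andI {bar : α → α} {A B F : NForm α} {P Q : Deriv α}
    (hP : WF bar (.andI A B P Q)) (hF : F ∈ concl (.andI A B P Q)) (hne : F ≠ .and A B) :
    F ∈ concl P ∧ F ∈ concl Q := by
  obtain ⟨-, -, Γ, hA, -, hcP, hcQ, -⟩ := hP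
  simp only [concl, Finset.mem_insert, Finset.mem_erase] at hF
  rw [hcP, Finset.mem_insert] at hF ⊢
  rw [hcQ, Finset.mem_insert]
  tauto

/-- Inverting a disjunction of the conclusion preserves the axiom graph. -/
theorem axg_inv {bar : α → α} (D E : NForm α) (P : Deriv α) (hP : WF bar P) (hcf : CutFree P)
    (hmem : NForm.or D E ∈ concl P) : axg (inv D E P) = axg P := by
  induction P with
  | ax Γ A C =>
    have hsh : A.shape = (negF bar C).shape := hP.1
    by_cases hA : A = .or D E
    · subst hA
      obtain ⟨C₁, C₂, rfl, h₁, h₂⟩ := exists_and_of_or_shape hsh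
      apply NGraph.eq_of_mem_iff <;> intro x <;>
        simp [inv, axg, idg, wkg, NGraph.union, snames_insert, idg_verts bar _ _ h₁,
          idg_verts bar _ _ h₂]
      tauto
    by_cases hC : C = .or D E
    · subst hC
      obtain ⟨A₁, A₂, rfl, h₁, h₂⟩ := exists_and_of_shape_or hsh
      apply NGraph.eq_of_mem_iff <;> intro x <;>
        simp [inv, axg, idg, wkg, NGraph.union, snames_insert, idg_verts bar _ _ h₁,
          idg_verts bar _ _ h₂]
      tauto
    · have hΓ : NForm.or D E ∈ Γ := by
        simpa [concl, Ne.symm hA, Ne.symm hC] using hmem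
      simp only [inv, if_neg hA, if_neg hC, axg, wkg, snames_insert,
        ← names_union_snames_erase hΓ, NForm.names, Set.union_assoc]
  | cut A P Q => exact hcf.elim
  | sup P Q ihP ihQ =>
    obtain ⟨hP, hQ, hc⟩ := hP
    simp only [inv, axg, ihP hP hcf.1 hmem, ihQ hQ hcf.2 (hc ▸ hmem)]
  | orI A B P ih =>
    by_cases h : A = D ∧ B = E
    · simp only [inv, if_pos h, axg]
    · simp only [inv, if_neg h, axg]
      exact ih hP.1 hcf (mem_of_mem_concl_orI hmem (by simp only [ne_eq, NForm.or.injEq]; tauto))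
  | andI A B P Q ihP ihQ =>
    obtain ⟨hmP, hmQ⟩ := mem_of_mem_concl_andI hP hmem (by simp)
    simp only [inv, axg, ihP hP.1 hcf.1 hmP, ihQ hP.2.1 hcf.2 hmQ]

/-- The two inversions of a conjunction of the conclusion jointly cover the axiom graph. -/
theorem axg_invl_union_axg_invr {bar : α → α} (D E : NForm α) (P : Deriv α) (hP : WF bar P)
    (hcf : CutFree P) (hmem : NForm.and D E ∈ concl P) :
    (axg (invl D E P)).union (axg (invr D E P)) = axg P := by
  induction P with
  | ax Γ A C =>
    have hsh : A.shape = (negF bar C).shape := hP.1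
    by_cases hA : A = .and D E
    · subst hA
      obtain ⟨C₁, C₂, rfl, h₁, h₂⟩ := exists_or_of_and_shape hsh
      apply NGraph.eq_of_mem_iff <;> intro x <;>
        simp [invl, invr, axg, idg, wkg, NGraph.union, snames_insert, idg_verts bar _ _ h₁,
          idg_verts bar _ _ h₂]
      tauto
    by_cases hC : C = .and D E
    · subst hC
      obtain ⟨A₁, A₂, rfl, h₁, h₂⟩ := exists_or_of_shape_and hsh
      apply NGraph.eq_of_mem_iff <;> intro x <;>
        simp [invl, invr, axg, idg, wkg, NGraph.union, snames_insert, idg_verts bar _ _ h₁,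
          idg_verts bar _ _ h₂]
      tauto
    · have hΓ : NForm.and D E ∈ Γ := by
        simpa [concl, Ne.symm hA, Ne.symm hC] using hmem
      apply NGraph.eq_of_mem_iff <;> intro x <;>
        simp [invl, invr, hA, hC, axg, wkg, NGraph.union, snames_insert,
          ← names_union_snames_erase hΓ, NForm.names]
      tauto
  | cut A P Q => exact hcf.elim
  | sup P Q ihP ihQ =>
    obtain ⟨hP, hQ, hc⟩ := hP
    simp only [invl, invr, axg]
    rw [NGraph.union_union_union_comm, ihP hP hcf.1 hmem, ihQ hQ hcf.2 (hc ▸ hmem)]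
  | orI A B P ih => exact ih hP.1 hcf (mem_of_mem_concl_orI hmem (by simp))
  | andI A B P Q ihP ihQ =>
    by_cases h : A = D ∧ B = E
    · simp only [invl, invr, if_pos h, axg]
    · obtain ⟨hmP, hmQ⟩ :=
        mem_of_mem_concl_andI hP hmem (by simp only [ne_eq, NForm.and.injEq]; tauto)
      simp only [invl, invr, if_neg h, axg]
      rw [NGraph.union_union_union_comm, ihP hP.1 hcf.1 hmP, ihQ hP.2.1 hcf.2 hmQ]

end GS4

/-- for cut-free derivations the axiom graph is invariant under
isolation of a non-atomic formula in the conclusion. -/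
theorem GS4.axg_isl_cutfree {α : Type} (bar : α → α)
    (hbar : Function.Involutive bar) (hfix : ∀ a, bar a ≠ a)
    (P : GS4.Deriv α) (hP : GS4.WF bar P) (hcf : GS4.CutFree P)
    (A : GS4.NForm α) (hA : A ∈ GS4.concl P) (hnonatom : ¬ A.isAtom) :
    GS4.axg (GS4.isl A P) = GS4.axg P := by
  cases A with
  | atom x a => exact (hnonatom trivial).elim
  | or D E => exact axg_inv D E P hP hcf hA
  | and D E => exact axg_invl_union_axg_invr D E P hP hcf hA
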